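/- arXiv:1005.5673 — 2 statements merged into one kernel-verified Lean document; each statement's English description precedes it below -/
import Mathlib

section
/- Let n > 1, n' = n/(n−1), let βₙ be the volume of the unit ball of ℝⁿ and τₙ = n·βₙ^{1/n}. Then for every f ∈ Lip₀(ℝⁿ): ‖f‖_{L(n',1)} := ∫₀^∞ t^{1/n' − 1} f*(t) dt ≤ n'·τₙ^{−1} ∫_{ℝⁿ} |∇f(x)| dx. -/
open MeasureTheory Set Filter Topology
open scoped ENNReal NNReal

noncomputable section

/-- The distribution function `μ_f(t) = μ{x : |f x| > t}` (as a real number). -/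
def distrib {α : Type*} [MeasurableSpace α] (μ : Measure α) (f : α → ℝ) (t : ℝ) : ℝ :=
  (μ {x | t < |f x|}).toReal

/-- The decreasing rearrangement `f*_μ(s) = inf{t ≥ 0 : μ_f(t) ≤ s}`. -/
def rearr {α : Type*} [MeasurableSpace α] (μ : Measure α) (f : α → ℝ) (s : ℝ) : ℝ :=
  sInf {t : ℝ | 0 ≤ t ∧ distrib μ f t ≤ s}

/-- The maximal function `f**_μ(t) = (1/t) ∫₀ᵗ f*_μ(s) ds`. -/
def rearr2 {α : Type*} [MeasurableSpace α] (μ : Measure α) (f : α → ℝ) (t : ℝ) : ℝ :=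
  (1 / t) * ∫ s in (0:ℝ)..t, rearr μ f s

/-- The modulus of the gradient `|∇f|(x) = limsup_{d(x,y)→0} |f x - f y| / d(x,y)`. -/
def gradMod {Ω : Type*} [MetricSpace Ω] (f : Ω → ℝ) (x : Ω) : ℝ :=
  limsup (fun y => |f x - f y| / dist x y) (𝓝[≠] x)

/-- The Minkowski content `μ⁺(A) = liminf_{h→0⁺} (μ(A_h) - μ(A))/h`. -/
def minkContent {Ω : Type*} [MetricSpace Ω] [MeasurableSpace Ω] (μ : Measure Ω)
    (A : Set Ω) : ℝ :=
  liminf (fun h => ((μ (Metric.thickening h A)).toReal - (μ A).toReal) / h) (𝓝[>] 0)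

/-- The isoperimetric profile: the (pointwise maximal) function with
`μ⁺(A) ≥ I(μ(A))` for all Borel sets `A`. -/
def isoProfile {Ω : Type*} [MetricSpace Ω] [MeasurableSpace Ω] (μ : Measure Ω) (t : ℝ) : ℝ :=
  sInf (minkContent μ '' {A : Set Ω | MeasurableSet A ∧ (μ A).toReal = t})

/-- Condition 1': the isoperimetric profile is continuous, positive on `(0,1)`,
and vanishes at `0`. -/
def Condition1' {Ω : Type*} [MetricSpace Ω] [MeasurableSpace Ω] (μ : Measure Ω) : Prop :=
  ContinuousOn (isoProfile μ) (Icc 0 1) ∧ (∀ t ∈ Ioo (0:ℝ) 1, 0 < isoProfile μ t) ∧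
    isoProfile μ 0 = 0

/-- Condition 2: for Lipschitz `f` and every `c`, `|∇f| = 0` μ-a.e. on `{f = c}`. -/
def Condition2 {Ω : Type*} [MetricSpace Ω] [MeasurableSpace Ω] (μ : Measure Ω) : Prop :=
  ∀ f : Ω → ℝ, (∃ K, LipschitzWith K f) → ∀ c : ℝ,
    ∀ᵐ x ∂(μ.restrict {x | f x = c}), gradMod f x = 0

/-- The weights `w_q` built from the isoperimetric profile. -/
def wq (I : ℝ → ℝ) (q t : ℝ) : ℝ :=
  if q = 1 then sInf ((fun s => I s / s) '' Ioo 0 t)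
  else ((1 / t) * ∫ s in (0:ℝ)..t, (s / I s) ^ (q / (q - 1))) ^ ((1 - q) / q)

/-- Local absolute continuity on `(0,1)`. -/
def LocAbsContOn01 (g : ℝ → ℝ) : Prop :=
  ∀ a b : ℝ, 0 < a → a < b → b < 1 → ∀ ε > 0, ∃ δ > 0,
    ∀ (n : ℕ) (c d : Fin n → ℝ),
      (∀ k, a ≤ c k ∧ c k ≤ d k ∧ d k ≤ b) →
      (Pairwise fun j k => Ioo (c j) (d j) ∩ Ioo (c k) (d k) = ∅) →
      (∑ k, (d k - c k)) ≤ δ → (∑ k, |g (d k) - g (c k)|) ≤ ε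

/-!
The Brunn–Minkowski inequality, obtained from the Prékopa–Leindler inequality, gives
`μ(A_h) ≥ μ(A) + h τ μ(A)^(1 - 1/d)` for the open `h`-neighborhood `A_h` of `A`. For `A = {|f| > t}`
this neighborhood is the set where the supremum of `|f|` over balls of radius `h` exceeds `t`.
Integrating in `t` therefore bounds `τ ∫ m_f(t)^(1 - 1/d) dt` by the integral of the difference
quotient of that local supremum. As `h → 0`, the reverse Fatou lemma and Rademacher's theorem bound
the latter by `∫ |∇f|`, with no appeal to the coarea formula. Finally, `s < f*(t)` forces
`t < m_f(s)`, so Tonelli's theorem yields `∫ t^(p - 1) f*(t) dt ≤ p⁻¹ ∫ m_f(s)^p ds`.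
-/

open Module Metric
open scoped Pointwise

section LayerCake

variable {α : Type*} [MeasurableSpace α]

theorem antitone_measure_superlevel (μ : Measure α) (f : α → ℝ≥0∞) :
    Antitone fun t : ℝ ↦ μ {x | ENNReal.ofReal t < f x} := fun _ _ hst ↦
  measure_mono fun _ hx ↦ (ENNReal.ofReal_le_ofReal hst).trans_lt hx

theorem lintegral_eq_lintegral_measure_superlevel (μ : Measure α) {f : α → ℝ≥0∞}
    (hf : Measurable f) :
    ∫⁻ x, f x ∂μ = ∫⁻ t in Ioi (0 : ℝ), μ {x | ENNReal.ofReal t < f x} := by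
  by_cases hfin : ∀ᵐ x ∂μ, f x ≠ ∞
  · calc ∫⁻ x, f x ∂μ = ∫⁻ x, ENNReal.ofReal (f x).toReal ∂μ :=
          lintegral_congr_ae (hfin.mono fun _ hx ↦ (ENNReal.ofReal_toReal hx).symm)
      _ = ∫⁻ t in Ioi (0 : ℝ), μ {x | t < (f x).toReal} :=
          lintegral_eq_lintegral_meas_lt μ (ae_of_all _ fun _ ↦ ENNReal.toReal_nonneg)
            hf.ennreal_toReal.aemeasurable
      _ = ∫⁻ t in Ioi (0 : ℝ), μ {x | ENNReal.ofReal t < f x} :=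
          setLIntegral_congr_fun measurableSet_Ioi fun t ht ↦ measure_congr <|
            hfin.mono fun _ hx ↦ propext (ENNReal.ofReal_lt_iff_lt_toReal (le_of_lt ht) hx).symm
  · have htop : μ {x | f x = ∞} ≠ 0 := by simpa [ae_iff] using hfin
    have hle : ∀ t : ℝ, μ {x | f x = ∞} ≤ μ {x | ENNReal.ofReal t < f x} := fun t ↦
      measure_mono fun x (hx : f x = ∞) ↦ by simp [hx]
    have hright : ∫⁻ t in Ioi (0 : ℝ), μ {x | ENNReal.ofReal t < f x} = ∞ :=
      top_unique <| (lintegral_mono hle).trans' <| by simp [ENNReal.mul_top htop]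
    rw [hright]
    exact lintegral_eq_top_of_measure_eq_top_ne_zero hf.aemeasurable htop

theorem lintegral_eq_iSup_lintegral_min_natCast (μ : Measure α) {f : α → ℝ≥0∞}
    (hf : Measurable f) : ∫⁻ x, f x ∂μ = ⨆ N : ℕ, ∫⁻ x, min (f x) N ∂μ := by
  rw [← lintegral_iSup (fun N ↦ hf.min measurable_const) fun N M hNM x ↦ by dsimp only; gcongr]
  simp_rw [← inf_iSup_eq, ENNReal.iSup_natCast, inf_top_eq]

end LayerCake

section LineBrunnMinkowski

variable {A B : Set ℝ}

theorem volume_add_volume_le_volume_add_of_isCompact (hA : IsCompact A) (hB : IsCompact B)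
    (hA₀ : A.Nonempty) (hB₀ : B.Nonempty) : volume A + volume B ≤ volume (A + B) := by
  obtain ⟨a, ha, hmax⟩ := hA.exists_isGreatest hA₀
  obtain ⟨b, hb, hmin⟩ := hB.exists_isLeast hB₀
  have hdisj : AEDisjoint volume (A + {b}) ({a} + B) := by
    refine measure_mono_null (t := {a + b}) ?_ (by simp)
    rintro _ ⟨⟨x, hx, _, rfl, rfl⟩, _, rfl, y, hy, hxy⟩
    exact le_antisymm (add_le_add_left (hmax hx) _) (hxy.symm ▸ add_le_add_right (hmin hy) _)
  calc volume A + volume B = volume (A + {b}) + volume ({a} + B) := by simp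
    _ = volume ((A + {b}) ∪ ({a} + B)) :=
        (measure_union₀ (isCompact_singleton.add hB).measurableSet.nullMeasurableSet hdisj).symm
    _ ≤ volume (A + B) := measure_mono <| union_subset
        (add_subset_add_left (singleton_subset_iff.2 hb))
        (add_subset_add_right (singleton_subset_iff.2 ha))

theorem volume_add_volume_le_volume_add (hA : MeasurableSet A) (hB : MeasurableSet B)
    (hA₀ : A.Nonempty) (hB₀ : B.Nonempty) : volume A + volume B ≤ volume (A + B) := by
  obtain ⟨a, ha⟩ := hA₀
  obtain ⟨b, hb⟩ := hB₀
  simp_rw [hA.measure_eq_iSup_isCompact, hB.measure_eq_iSup_isCompact, iSup_and']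
  refine ENNReal.biSup_add_biSup_le' ⟨∅, empty_subset _, isCompact_empty⟩
    ⟨∅, empty_subset _, isCompact_empty⟩ fun K ⟨hKA, hK⟩ L ⟨hLB, hL⟩ ↦ ?_
  calc volume K + volume L ≤ volume (insert a K) + volume (insert b L) := by
        gcongr <;> exact subset_insert _ _
    _ ≤ volume (insert a K + insert b L) :=
        volume_add_volume_le_volume_add_of_isCompact (hK.insert a) (hL.insert b)
          (insert_nonempty _ _) (insert_nonempty _ _)
    _ ≤ volume (A + B) := by
        gcongr <;> exact insert_subset ‹_› ‹_›

end LineBrunnMinkowski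

theorem rpow_mul_rpow_le_weighted_add {a b : ℝ} (ha : 0 < a) (hb : 0 < b) (hab : a + b = 1)
    (x y : ℝ≥0∞) : x ^ a * y ^ b ≤ ENNReal.ofReal a * x + ENNReal.ofReal b * y := by
  have hconj : a⁻¹.HolderConjugate b⁻¹ :=
    Real.holderConjugate_iff.2 ⟨(one_lt_inv₀ ha).2 (by linarith), by simpa using hab⟩
  simpa [← ENNReal.rpow_mul, mul_inv_cancel₀ ha.ne', mul_inv_cancel₀ hb.ne',
    ENNReal.ofReal_inv_of_pos ha, ENNReal.ofReal_inv_of_pos hb, div_eq_mul_inv, mul_comm]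
    using ENNReal.young_inequality (x ^ a) (y ^ b) hconj

theorem iSup_rpow_of_pos {ι : Sort*} {a : ℝ} (ha : 0 < a) (u : ι → ℝ≥0∞) :
    (⨆ i, u i) ^ a = ⨆ i, u i ^ a := by
  simpa only [ENNReal.orderIsoRpow_apply] using (ENNReal.orderIsoRpow a ha).map_iSup u

/-- The Prékopa–Leindler inequality with weights `a`, `b` for the measure `μ`. -/
def PrekopaLeindler {E : Type*} [AddCommGroup E] [Module ℝ E] [MeasurableSpace E]
    (μ : Measure E) (a b : ℝ) : Prop :=
  ∀ ⦃f g h : E → ℝ≥0∞⦄, Measurable f → Measurable g → Measurable h →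
    (∀ x y, f x ^ a * g y ^ b ≤ h (a • x + b • y)) →
    (∫⁻ x, f x ∂μ) ^ a * (∫⁻ x, g x ∂μ) ^ b ≤ ∫⁻ x, h x ∂μ

section PrekopaLeindler

variable {a b : ℝ}

theorem smul_superlevel_add_smul_superlevel_subset {E : Type*} [AddCommGroup E] [Module ℝ E]
    {f g h : E → ℝ≥0∞} (ha : 0 < a) (hb : 0 < b) (hab : a + b = 1)
    (H : ∀ x y, f x ^ a * g y ^ b ≤ h (a • x + b • y)) (u : ℝ≥0∞) :
    a • {x | u < f x} + b • {x | u < g x} ⊆ {x | u < h x} := by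
  rintro _ ⟨_, ⟨x, hx, rfl⟩, _, ⟨y, hy, rfl⟩, rfl⟩
  calc u = u ^ a * u ^ b := by
        rw [← ENNReal.rpow_add_of_nonneg _ _ ha.le hb.le, hab, ENNReal.rpow_one]
    _ < f x ^ a * g y ^ b :=
        ENNReal.mul_lt_mul (ENNReal.rpow_lt_rpow hx ha) (ENNReal.rpow_lt_rpow hy hb)
    _ ≤ h (a • x + b • y) := H x y

section Line

variable {f g h : ℝ → ℝ≥0∞}

-- Equal suprema make the superlevel sets of `f` and `g` nonempty at the same levels.
theorem weighted_lintegral_add_le_of_iSup_eq_one (ha : 0 < a) (hb : 0 < b) (hab : a + b = 1)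
    (hf : Measurable f) (hg : Measurable g) (hh : Measurable h)
    (hf₁ : ⨆ x, f x = 1) (hg₁ : ⨆ x, g x = 1)
    (H : ∀ x y, f x ^ a * g y ^ b ≤ h (a • x + b • y)) :
    ENNReal.ofReal a * (∫⁻ x, f x) + ENNReal.ofReal b * (∫⁻ x, g x) ≤ ∫⁻ x, h x := by
  simp_rw [lintegral_eq_lintegral_measure_superlevel volume hf,
    lintegral_eq_lintegral_measure_superlevel volume hg,
    lintegral_eq_lintegral_measure_superlevel volume hh]
  rw [← lintegral_const_mul _ (antitone_measure_superlevel _ _).measurable,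
    ← lintegral_const_mul _ (antitone_measure_superlevel _ _).measurable,
    ← lintegral_add_left ((antitone_measure_superlevel _ _).measurable.const_mul _)]
  refine lintegral_mono fun t ↦ ?_
  set u := ENNReal.ofReal t
  rcases lt_or_ge u 1 with hu | hu
  · have hfu : {x | u < f x}.Nonempty := lt_iSup_iff.1 (hu.trans_eq hf₁.symm)
    have hgu : {x | u < g x}.Nonempty := lt_iSup_iff.1 (hu.trans_eq hg₁.symm)
    have hscale : ∀ {c : ℝ}, 0 < c → ∀ s : Set ℝ,
        ENNReal.ofReal c * volume s = volume (c • s) := fun hc s ↦ by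
      simp [Measure.addHaar_smul_of_nonneg _ hc.le]
    rw [hscale ha, hscale hb]
    exact (volume_add_volume_le_volume_add ((measurableSet_lt measurable_const hf).const_smul₀ a)
      ((measurableSet_lt measurable_const hg).const_smul₀ b) hfu.smul_set hgu.smul_set).trans
      (measure_mono (smul_superlevel_add_smul_superlevel_subset ha hb hab H u))
  · have hfu : {x | u < f x} = ∅ :=
      eq_empty_of_forall_notMem fun x ↦ not_lt.2 ((hf₁ ▸ le_iSup f x).trans hu)
    have hgu : {x | u < g x} = ∅ :=
      eq_empty_of_forall_notMem fun x ↦ not_lt.2 ((hg₁ ▸ le_iSup g x).trans hu)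
    simp [hfu, hgu]

theorem lintegral_rpow_mul_lintegral_rpow_le_of_iSup_ne_top (ha : 0 < a) (hb : 0 < b)
    (hab : a + b = 1) (hf : Measurable f) (hg : Measurable g) (hh : Measurable h)
    (hf_top : ⨆ x, f x ≠ ∞) (hg_top : ⨆ x, g x ≠ ∞)
    (H : ∀ x y, f x ^ a * g y ^ b ≤ h (a • x + b • y)) :
    (∫⁻ x, f x) ^ a * (∫⁻ x, g x) ^ b ≤ ∫⁻ x, h x := by
  set S := ⨆ x, f x
  set T := ⨆ x, g x
  by_cases hS₀ : S = 0
  · have hf₀ : ∀ x, f x = 0 := ENNReal.iSup_eq_zero.1 hS₀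
    simp [hf₀, ha]
  by_cases hT₀ : T = 0
  · have hg₀ : ∀ x, g x = 0 := ENNReal.iSup_eq_zero.1 hT₀
    simp [hg₀, hb]
  set R := S ^ a * T ^ b
  have hR₀ : R ≠ 0 := by simp [R, hS₀, hT₀, hf_top, hg_top]
  have hR_top : R ≠ ∞ := ENNReal.mul_ne_top (by simp [ha.le, hf_top]) (by simp [hb.le, hg_top])
  have hscale : ∀ u v : ℝ≥0∞, (S⁻¹ * u) ^ a * (T⁻¹ * v) ^ b = R⁻¹ * (u ^ a * v ^ b) := by
    intro u v
    rw [ENNReal.mul_rpow_of_nonneg _ _ ha.le, ENNReal.mul_rpow_of_nonneg _ _ hb.le,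
      ENNReal.inv_rpow, ENNReal.inv_rpow,
      ENNReal.mul_inv (.inr (by simp [hb.le, hg_top])) (.inl (by simp [ha.le, hf_top]))]
    ring
  have hnormalized := weighted_lintegral_add_le_of_iSup_eq_one ha hb hab
    (hf.const_mul S⁻¹) (hg.const_mul T⁻¹) (hh.const_mul R⁻¹)
    (by rw [← ENNReal.mul_iSup, ENNReal.inv_mul_cancel hS₀ hf_top])
    (by rw [← ENNReal.mul_iSup, ENNReal.inv_mul_cancel hT₀ hg_top])
    (fun x y ↦ by rw [hscale]; gcongr; exact H x y)
  rw [lintegral_const_mul _ hf, lintegral_const_mul _ hg, lintegral_const_mul _ hh]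
    at hnormalized
  have hscaled : R⁻¹ * ((∫⁻ x, f x) ^ a * (∫⁻ x, g x) ^ b) ≤ R⁻¹ * ∫⁻ x, h x :=
    hscale _ _ ▸ (rpow_mul_rpow_le_weighted_add ha hb hab _ _).trans hnormalized
  exact (ENNReal.mul_le_mul_iff_right (ENNReal.inv_ne_zero.2 hR_top)
    (ENNReal.inv_ne_top.2 hR₀)).1 hscaled

theorem prekopaLeindler_volume_real (ha : 0 < a) (hb : 0 < b) (hab : a + b = 1) :
    PrekopaLeindler (volume : Measure ℝ) a b := by
  intro f g h hf hg hh H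
  simp_rw [lintegral_eq_iSup_lintegral_min_natCast volume hf,
    lintegral_eq_iSup_lintegral_min_natCast volume hg, iSup_rpow_of_pos ha, iSup_rpow_of_pos hb,
    ENNReal.iSup_mul, ENNReal.mul_iSup]
  refine iSup₂_le fun N M ↦ lintegral_rpow_mul_lintegral_rpow_le_of_iSup_ne_top ha hb hab
    (hf.min measurable_const) (hg.min measurable_const) hh
    (ne_top_of_le_ne_top (ENNReal.natCast_ne_top N) (iSup_le fun _ ↦ min_le_right _ _))
    (ne_top_of_le_ne_top (ENNReal.natCast_ne_top M) (iSup_le fun _ ↦ min_le_right _ _))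
    fun x y ↦ (H x y).trans' ?_
  gcongr <;> exact min_le_left _ _

end Line

section Permanence

variable {E F : Type*} [AddCommGroup E] [Module ℝ E] [MeasurableSpace E]
  [AddCommGroup F] [Module ℝ F] [MeasurableSpace F] {μ : Measure E} {ν : Measure F}

theorem PrekopaLeindler.prod [SFinite ν] (hμ : PrekopaLeindler μ a b)
    (hν : PrekopaLeindler ν a b) : PrekopaLeindler (μ.prod ν) a b := by
  intro f g h hf hg hh H
  rw [lintegral_prod _ hf.aemeasurable, lintegral_prod _ hg.aemeasurable,
    lintegral_prod _ hh.aemeasurable]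
  exact hμ hf.lintegral_prod_right' hg.lintegral_prod_right' hh.lintegral_prod_right' fun x y ↦
    hν (by fun_prop) (by fun_prop) (by fun_prop) fun z w ↦ H (x, z) (y, w)

theorem PrekopaLeindler.map (hμ : PrekopaLeindler μ a b) {L : E →ₗ[ℝ] F} (hL : Measurable L) :
    PrekopaLeindler (μ.map L) a b := by
  intro f g h hf hg hh H
  rw [lintegral_map hf hL, lintegral_map hg hL, lintegral_map hh hL]
  exact hμ (hf.comp hL) (hg.comp hL) (hh.comp hL) fun x y ↦ by simpa using H (L x) (L y)

theorem PrekopaLeindler.smul (hμ : PrekopaLeindler μ a b) (ha : 0 ≤ a) (hb : 0 ≤ b)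
    (hab : a + b = 1) (c : ℝ≥0∞) : PrekopaLeindler (c • μ) a b := by
  intro f g h hf hg hh H
  simp_rw [lintegral_smul_measure, smul_eq_mul]
  calc (c * ∫⁻ x, f x ∂μ) ^ a * (c * ∫⁻ x, g x ∂μ) ^ b
      = (c ^ a * c ^ b) * ((∫⁻ x, f x ∂μ) ^ a * (∫⁻ x, g x ∂μ) ^ b) := by
        rw [ENNReal.mul_rpow_of_nonneg _ _ ha, ENNReal.mul_rpow_of_nonneg _ _ hb]
        ring
    _ ≤ c * ∫⁻ x, h x ∂μ := by
        rw [← ENNReal.rpow_add_of_nonneg _ _ ha hb, hab, ENNReal.rpow_one]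
        gcongr
        exact hμ hf hg hh H

theorem PrekopaLeindler.measure_rpow_mul_measure_rpow_le (hμ : PrekopaLeindler μ a b)
    (ha : 0 < a) (hb : 0 < b) {A B : Set E} (hA : MeasurableSet A) (hB : MeasurableSet B) :
    μ A ^ a * μ B ^ b ≤ μ (a • A + b • B) := by
  set C := toMeasurable μ (a • A + b • B)
  have hC : MeasurableSet C := measurableSet_toMeasurable _ _
  have key := hμ (f := A.indicator 1) (g := B.indicator 1) (h := C.indicator 1)
    (measurable_one.indicator hA) (measurable_one.indicator hB) (measurable_one.indicator hC) ?_
  · simpa only [lintegral_indicator_one hA, lintegral_indicator_one hB,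
      lintegral_indicator_one hC, C, measure_toMeasurable] using key
  · intro x y
    by_cases hx : x ∈ A
    · by_cases hy : y ∈ B
      · have hxy : a • x + b • y ∈ C :=
          subset_toMeasurable _ _ (add_mem_add (smul_mem_smul_set hx) (smul_mem_smul_set hy))
        simp [hx, hy, hxy]
      · simp [hy, hb]
    · simp [hx, ha]

end Permanence

section Haar

variable {E F : Type*} [NormedAddCommGroup E] [NormedSpace ℝ E] [FiniteDimensional ℝ E]
  [MeasurableSpace E] [BorelSpace E] [NormedAddCommGroup F] [NormedSpace ℝ F]
  [FiniteDimensional ℝ F] [MeasurableSpace F] [BorelSpace F]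

theorem PrekopaLeindler.of_finrank_eq {μ : Measure E} [μ.IsAddHaarMeasure]
    (hμ : PrekopaLeindler μ a b) (ha : 0 ≤ a) (hb : 0 ≤ b) (hab : a + b = 1)
    (hEF : finrank ℝ E = finrank ℝ F) (ν : Measure F) [ν.IsAddHaarMeasure] :
    PrekopaLeindler ν a b := by
  let L : E ≃L[ℝ] F := .ofFinrankEq hEF
  have : (μ.map L).IsAddHaarMeasure := L.isAddHaarMeasure_map μ
  rw [Measure.isAddLeftInvariant_eq_smul ν (μ.map L)]
  exact (hμ.map (L := L.toLinearEquiv.toLinearMap) L.continuous.measurable).smul ha hb hab _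

theorem prekopaLeindler_volume_pi (ha : 0 < a) (hb : 0 < b) (hab : a + b = 1) (n : ℕ) :
    PrekopaLeindler (volume : Measure (Fin n → ℝ)) a b := by
  induction n with
  | zero =>
    intro f g h _ _ _ H
    rw [Measure.volume_pi_eq_dirac, lintegral_dirac, lintegral_dirac, lintegral_dirac]
    convert H _ _
  | succ n ih =>
    exact ((prekopaLeindler_volume_real ha hb hab).prod ih).of_finrank_eq ha.le hb.le hab
      (by simp [add_comm]) volume

theorem prekopaLeindler_addHaar (ha : 0 < a) (hb : 0 < b) (hab : a + b = 1)
    (μ : Measure E) [μ.IsAddHaarMeasure] : PrekopaLeindler μ a b :=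
  (prekopaLeindler_volume_pi ha hb hab (finrank ℝ E)).of_finrank_eq ha.le hb.le hab (by simp) μ

end Haar

end PrekopaLeindler

section BrunnMinkowski

theorem measure_le_measure_add_left {G : Type*} [AddGroup G] [MeasurableSpace G]
    [MeasurableAdd G] (μ : Measure G) [μ.IsAddLeftInvariant] {A : Set G} (hA : A.Nonempty)
    (B : Set G) : μ B ≤ μ (A + B) := by
  obtain ⟨a, ha⟩ := hA
  calc μ B = μ ({a} + B) := by simp
    _ ≤ μ (A + B) := by gcongr; exact singleton_subset_iff.2 ha

variable {E : Type*} [NormedAddCommGroup E] [NormedSpace ℝ E] [FiniteDimensional ℝ E]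
  [MeasurableSpace E] [BorelSpace E] (μ : Measure E) [μ.IsAddHaarMeasure] {A B : Set E}

theorem ofReal_add_pow_finrank_le_measure_add (hA : MeasurableSet A) (hB : MeasurableSet B)
    {r s : ℝ} (hr : 0 < r) (hs : 0 < s) (hrA : ENNReal.ofReal r ^ finrank ℝ E ≤ μ A)
    (hsB : ENNReal.ofReal s ^ finrank ℝ E ≤ μ B) :
    ENNReal.ofReal (r + s) ^ finrank ℝ E ≤ μ (A + B) := by
  have hsmul : ∀ {c : ℝ}, 0 < c → ∀ C : Set E,
      μ (c⁻¹ • C) = μ C / ENNReal.ofReal c ^ finrank ℝ E := fun hc C ↦ by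
    rw [Measure.addHaar_smul_of_nonneg _ (inv_nonneg.2 hc.le), ENNReal.ofReal_pow (by positivity),
      ENNReal.ofReal_inv_of_pos hc, ← ENNReal.inv_pow, mul_comm, div_eq_mul_inv]
  have hone_le : ∀ {c : ℝ} {C : Set E}, 0 < c →
      (ENNReal.ofReal c ^ finrank ℝ E ≤ μ C ↔ 1 ≤ μ (c⁻¹ • C)) := fun hc ↦ by
    rw [hsmul hc, ENNReal.le_div_iff_mul_le (by simp [hc]) (by simp), one_mul]
  have hrs : 0 < r + s := by positivity
  have hweights : r / (r + s) + s / (r + s) = 1 := by field_simp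
  rw [hone_le hrs]
  calc 1 = 1 ^ (r / (r + s)) * 1 ^ (s / (r + s)) := by simp
    _ ≤ μ (r⁻¹ • A) ^ (r / (r + s)) * μ (s⁻¹ • B) ^ (s / (r + s)) := by
        gcongr
        · exact (hone_le hr).1 hrA
        · exact (hone_le hs).1 hsB
    _ ≤ μ ((r / (r + s)) • r⁻¹ • A + (s / (r + s)) • s⁻¹ • B) :=
        (prekopaLeindler_addHaar (by positivity) (by positivity) hweights μ)
          |>.measure_rpow_mul_measure_rpow_le (by positivity) (by positivity)
            (hA.const_smul₀ _) (hB.const_smul₀ _)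
    _ = μ ((r + s)⁻¹ • (A + B)) := by
        rw [smul_smul, smul_smul, smul_add]
        congr! 3 <;> field_simp

theorem brunn_minkowski [Nontrivial E] (hA : MeasurableSet A)
    (hB : MeasurableSet B) (hA₀ : A.Nonempty) (hB₀ : B.Nonempty) :
    μ A ^ (finrank ℝ E : ℝ)⁻¹ + μ B ^ (finrank ℝ E : ℝ)⁻¹ ≤ μ (A + B) ^ (finrank ℝ E : ℝ)⁻¹ := by
  have hd : 0 < (finrank ℝ E : ℝ)⁻¹ := inv_pos.2 (Nat.cast_pos.2 finrank_pos)
  have hB_le : μ B ≤ μ (A + B) := measure_le_measure_add_left μ hA₀ B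
  have hA_le : μ A ≤ μ (A + B) := add_comm A B ▸ measure_le_measure_add_left μ hB₀ A
  rcases eq_or_ne (μ (A + B)) ∞ with htop | htop
  · simp [htop, hd]
  rcases eq_or_ne (μ A) 0 with hA0 | hA0
  · simpa [hA0, hd] using ENNReal.rpow_le_rpow hB_le hd.le
  rcases eq_or_ne (μ B) 0 with hB0 | hB0
  · simpa [hB0, hd] using ENNReal.rpow_le_rpow hA_le hd.le
  have hroot : ∀ {C : Set E}, μ C ≠ 0 → μ C ≤ μ (A + B) →
      ∃ r : ℝ, 0 < r ∧ ENNReal.ofReal r = μ C ^ (finrank ℝ E : ℝ)⁻¹ := fun h₀ hle ↦ by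
    have hfin := ne_top_of_le_ne_top htop hle
    exact ⟨_, ENNReal.toReal_pos (by simp [h₀, hfin]) (by simp [hfin]),
      ENNReal.ofReal_toReal (by simp [hfin])⟩
  have hpow : ∀ x : ℝ≥0∞, (x ^ (finrank ℝ E : ℝ)⁻¹) ^ finrank ℝ E = x := fun x ↦ by
    rw [← ENNReal.rpow_natCast, ENNReal.rpow_inv_rpow (inv_pos.1 hd).ne']
  obtain ⟨r, hr, hrA⟩ := hroot hA0 hA_le
  obtain ⟨s, hs, hsB⟩ := hroot hB0 hB_le
  rw [← hrA, ← hsB, ← ENNReal.ofReal_add hr.le hs.le, ENNReal.le_rpow_inv_iff (inv_pos.1 hd),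
    ENNReal.rpow_natCast]
  exact ofReal_add_pow_finrank_le_measure_add μ hA hB hr hs
    (by rw [hrA, hpow]) (by rw [hsB, hpow])

end BrunnMinkowski

section Isoperimetry

variable {E : Type*} [NormedAddCommGroup E] [NormedSpace ℝ E] [MeasurableSpace E]

/-- The sharp isoperimetric constant `d β ^ (1 / d)` of a `d`-dimensional normed space whose unit
ball has measure `β`; for the Lebesgue measure of `ℝⁿ` this is `τₙ`. -/
def isoperimetricConst (μ : Measure E) : ℝ≥0∞ :=
  finrank ℝ E * μ (ball 0 1) ^ (finrank ℝ E : ℝ)⁻¹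

theorem isoperimetricConst_eq_ofReal [ProperSpace E] (μ : Measure E)
    [IsFiniteMeasureOnCompacts μ] : isoperimetricConst μ =
      ENNReal.ofReal (finrank ℝ E * (μ (ball 0 1)).toReal ^ (finrank ℝ E : ℝ)⁻¹) := by
  rw [isoperimetricConst, ENNReal.ofReal_mul (by positivity), ENNReal.ofReal_natCast,
    ENNReal.toReal_rpow, ENNReal.ofReal_toReal (by simp [measure_ball_lt_top.ne])]

variable [FiniteDimensional ℝ E] [BorelSpace E] (μ : Measure E) [μ.IsAddHaarMeasure]

theorem measure_add_isoperimetricConst_mul_le_measure_thickening [Nontrivial E] {A : Set E}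
    (hA : MeasurableSet A) (hA₀ : A.Nonempty) {h : ℝ} (hh : 0 < h) :
    μ A + ENNReal.ofReal h * isoperimetricConst μ * μ A ^ (1 - (finrank ℝ E : ℝ)⁻¹) ≤
      μ (thickening h A) := by
  set d := finrank ℝ E
  have hd : (d : ℝ) ≠ 0 := Nat.cast_ne_zero.2 finrank_pos.ne'
  have hd₁ : 1 ≤ d := finrank_pos
  set a := μ A ^ (d : ℝ)⁻¹
  have hpow : ∀ x : ℝ≥0∞, (x ^ (d : ℝ)⁻¹) ^ d = x := fun x ↦ by
    rw [← ENNReal.rpow_natCast, ENNReal.rpow_inv_rpow hd]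
  have hpred : a ^ (d - 1) = μ A ^ (1 - (d : ℝ)⁻¹) := by
    rw [← ENNReal.rpow_natCast, ← ENNReal.rpow_mul, Nat.cast_sub hd₁, Nat.cast_one, mul_sub,
      inv_mul_cancel₀ hd, mul_one]
  have hball : μ (ball 0 h) ^ (d : ℝ)⁻¹ = ENNReal.ofReal h * μ (ball 0 1) ^ (d : ℝ)⁻¹ := by
    rw [Measure.addHaar_ball_of_pos _ _ hh, ENNReal.mul_rpow_of_nonneg _ _ (by positivity),
      ENNReal.ofReal_pow hh.le, ← ENNReal.rpow_natCast, ENNReal.rpow_rpow_inv hd]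
  calc μ A + ENNReal.ofReal h * isoperimetricConst μ * μ A ^ (1 - (d : ℝ)⁻¹)
      = a ^ d + d * a ^ (d - 1) * μ (ball 0 h) ^ (d : ℝ)⁻¹ := by
        rw [hpow, hpred, hball, isoperimetricConst]; ring
    _ ≤ (a + μ (ball 0 h) ^ (d : ℝ)⁻¹) ^ d := pow_add_mul_le_add_pow zero_le zero_le d
    _ ≤ (μ (A + ball 0 h) ^ (d : ℝ)⁻¹) ^ d := by
        gcongr
        exact brunn_minkowski μ hA measurableSet_ball hA₀ ⟨0, mem_ball_self hh⟩
    _ = μ (thickening h A) := by rw [hpow, add_ball_zero]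

end Isoperimetry

section BallSup

variable {X : Type*} [PseudoMetricSpace X]

/-- The supremum of `g` over the open ball of radius `h`, whose superlevel sets are the
`h`-neighborhoods of those of `g`. -/
def ballSup (g : X → ℝ≥0∞) (h : ℝ) (x : X) : ℝ≥0∞ := ⨆ y ∈ ball x h, g y

theorem superlevel_ballSup (g : X → ℝ≥0∞) (h : ℝ) (u : ℝ≥0∞) :
    {x | u < ballSup g h x} = thickening h {x | u < g x} := by
  ext x
  simp [ballSup, lt_iSup_iff, mem_thickening_iff, dist_comm, and_comm]

theorem measurable_ballSup [MeasurableSpace X] [OpensMeasurableSpace X] (g : X → ℝ≥0∞) (h : ℝ) :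
    Measurable (ballSup g h) :=
  measurable_of_Ioi fun u ↦ by
    rw [show ballSup g h ⁻¹' Ioi u = thickening h {x | u < g x} from superlevel_ballSup g h u]
    exact isOpen_thickening.measurableSet

/-- The largest upper difference quotient of `g` at `x` at scale `h > 0`; the value for
`h ≤ 0` is junk. -/
def upperSlope (g : X → ℝ≥0∞) (h : ℝ) (x : X) : ℝ≥0∞ := (ballSup g h x - g x) / ENNReal.ofReal h

theorem measurable_upperSlope [MeasurableSpace X] [OpensMeasurableSpace X] {g : X → ℝ≥0∞}
    (hg : Measurable g) (h : ℝ) : Measurable (upperSlope g h) :=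
  ((measurable_ballSup g h).sub hg).div_const _

theorem ballSup_le_add_mul_upperSlope (g : X → ℝ≥0∞) {h : ℝ} (hh : 0 < h) (x : X) :
    ballSup g h x ≤ g x + ENNReal.ofReal h * upperSlope g h x := by
  rw [upperSlope, ENNReal.mul_div_cancel (by simpa using hh) ENNReal.ofReal_ne_top]
  exact le_add_tsub

theorem upperSlope_le {g : X → ℝ≥0∞} {h : ℝ} {x : X} {c : ℝ≥0∞}
    (H : ∀ y ∈ ball x h, g y ≤ g x + c * ENNReal.ofReal h) : upperSlope g h x ≤ c :=
  ENNReal.div_le_of_le_mul <| tsub_le_iff_left.2 <| iSup₂_le H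

end BallSup

section UpperSlopeNorm

variable {X F : Type*} [PseudoMetricSpace X] [NormedAddCommGroup F]

theorem upperSlope_enorm_le {f : X → F} {h : ℝ} {x : X} {c : ℝ≥0∞}
    (H : ∀ y ∈ ball x h, ‖f y - f x‖ₑ ≤ c * ENNReal.ofReal h) :
    upperSlope (‖f ·‖ₑ) h x ≤ c :=
  upperSlope_le fun y hy ↦ calc
    ‖f y‖ₑ = ‖f x + (f y - f x)‖ₑ := by rw [add_sub_cancel]
    _ ≤ ‖f x‖ₑ + ‖f y - f x‖ₑ := enorm_add_le _ _
    _ ≤ ‖f x‖ₑ + c * ENNReal.ofReal h := by gcongr; exact H y hy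

theorem upperSlope_enorm_le_indicator {f : X → F} {K : ℝ≥0} (hf : LipschitzWith K f) {h R : ℝ}
    (hhR : h ≤ R) (x : X) :
    upperSlope (‖f ·‖ₑ) h x ≤ (cthickening R (tsupport f)).indicator (fun _ ↦ (K : ℝ≥0∞)) x := by
  by_cases hx : x ∈ cthickening R (tsupport f)
  · rw [indicator_of_mem hx]
    refine upperSlope_enorm_le fun y hy ↦ ?_
    calc ‖f y - f x‖ₑ = edist (f y) (f x) := (edist_eq_enorm_sub _ _).symm
      _ ≤ K * edist y x := hf y x
      _ ≤ K * ENNReal.ofReal h := by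
          rw [edist_dist]
          gcongr
          exact (mem_ball.1 hy).le
  · rw [indicator_of_notMem hx]
    refine upperSlope_le fun y hy ↦ ?_
    have hy_support : y ∉ tsupport f := fun hyf ↦ hx <|
      mem_cthickening_of_dist_le x y R _ hyf ((mem_ball'.1 hy).le.trans hhR)
    simp [image_eq_zero_of_notMem_tsupport hy_support]

theorem limsup_upperSlope_enorm_le_of_hasFDerivAt {E F : Type*} [NormedAddCommGroup E]
    [NormedSpace ℝ E] [NormedAddCommGroup F] [NormedSpace ℝ F] {f : E → F} {f' : E →L[ℝ] F}
    {x : E} (hf : HasFDerivAt f f' x) :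
    limsup (fun h ↦ upperSlope (‖f ·‖ₑ) h x) (𝓝[>] 0) ≤ ‖f'‖ₑ := by
  refine ENNReal.le_of_forall_pos_le_add fun ε hε _ ↦ ?_
  obtain ⟨δ, hδ, hball⟩ := Metric.eventually_nhds_iff.1 (hf.isLittleO.def (NNReal.coe_pos.2 hε))
  refine limsup_le_of_le (by isBoundedDefault) ?_
  filter_upwards [Ioo_mem_nhdsGT hδ] with h ⟨_, hhδ⟩
  refine upperSlope_enorm_le fun y hy ↦ ?_
  have hbound : ‖f y - f x‖ ≤ (‖f'‖ + ε) * h := calc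
    ‖f y - f x‖ = ‖f' (y - x) + (f y - f x - f' (y - x))‖ := by rw [add_sub_cancel]
    _ ≤ ‖f'‖ * ‖y - x‖ + ε * ‖y - x‖ :=
        norm_add_le_of_le (f'.le_opNorm _) (hball ((mem_ball.1 hy).trans hhδ))
    _ = (‖f'‖ + ε) * ‖y - x‖ := by ring
    _ ≤ (‖f'‖ + ε) * h := by gcongr; exact (mem_ball_iff_norm.1 hy).le
  rw [← ofReal_norm, ← ofReal_norm, ← ENNReal.ofReal_coe_nnreal,
    ← ENNReal.ofReal_add (norm_nonneg _) ε.coe_nonneg, ← ENNReal.ofReal_mul (by positivity)]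
  exact ENNReal.ofReal_le_ofReal hbound

end UpperSlopeNorm

section Sobolev

variable {E F : Type*} [NormedAddCommGroup E] [NormedSpace ℝ E] [FiniteDimensional ℝ E]
  [MeasurableSpace E] [BorelSpace E] [NormedAddCommGroup F] [NormedSpace ℝ F]
  (μ : Measure E) [μ.IsAddHaarMeasure]

theorem lintegral_add_isoperimetricConst_mul_le_lintegral_ballSup (hE : 1 < finrank ℝ E)
    {g : E → ℝ≥0∞} (hg : Measurable g) {h : ℝ} (hh : 0 < h) :
    ∫⁻ x, g x ∂μ + ENNReal.ofReal h * isoperimetricConst μ *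
        ∫⁻ t in Ioi (0 : ℝ), μ {x | ENNReal.ofReal t < g x} ^ (1 - (finrank ℝ E : ℝ)⁻¹) ≤
      ∫⁻ x, ballSup g h x ∂μ := by
  have : Nontrivial E := nontrivial_of_finrank_pos (R := ℝ) (by lia)
  have hp : 0 < 1 - (finrank ℝ E : ℝ)⁻¹ := sub_pos.2 (inv_lt_one_of_one_lt₀ (mod_cast hE))
  have hmeas := (antitone_measure_superlevel μ g).measurable
  rw [lintegral_eq_lintegral_measure_superlevel μ hg,
    lintegral_eq_lintegral_measure_superlevel μ (measurable_ballSup g h),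
    ← lintegral_const_mul _ (hmeas.pow_const _), ← lintegral_add_left hmeas]
  refine lintegral_mono fun t ↦ ?_
  simp only [superlevel_ballSup]
  rcases {x | ENNReal.ofReal t < g x}.eq_empty_or_nonempty with hempty | hne
  · simp [hempty, hp]
  · exact measure_add_isoperimetricConst_mul_le_measure_thickening μ
      (measurableSet_lt measurable_const hg) hne hh

theorem isoperimetricConst_mul_lintegral_le_lintegral_upperSlope (hE : 1 < finrank ℝ E)
    {g : E → ℝ≥0∞} (hg : Measurable g) (hg_fin : ∫⁻ x, g x ∂μ ≠ ∞) {h : ℝ} (hh : 0 < h) :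
    isoperimetricConst μ *
        ∫⁻ t in Ioi (0 : ℝ), μ {x | ENNReal.ofReal t < g x} ^ (1 - (finrank ℝ E : ℝ)⁻¹) ≤
      ∫⁻ x, upperSlope g h x ∂μ := by
  have hincrement := calc
    _ ≤ ∫⁻ x, ballSup g h x ∂μ :=
        lintegral_add_isoperimetricConst_mul_le_lintegral_ballSup μ hE hg hh
    _ ≤ ∫⁻ x, (g x + ENNReal.ofReal h * upperSlope g h x) ∂μ :=
        lintegral_mono (ballSup_le_add_mul_upperSlope g hh)
    _ = ∫⁻ x, g x ∂μ + ENNReal.ofReal h * ∫⁻ x, upperSlope g h x ∂μ := by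
        rw [lintegral_add_left hg, lintegral_const_mul _ (measurable_upperSlope hg h)]
  rw [ENNReal.add_le_add_iff_left hg_fin, mul_assoc] at hincrement
  exact (ENNReal.mul_le_mul_iff_right (by simpa using hh) ENNReal.ofReal_ne_top).1 hincrement

variable [FiniteDimensional ℝ F] {K : ℝ≥0} {f : E → F}

theorem limsup_lintegral_upperSlope_enorm_le (hf : LipschitzWith K f)
    (hf_supp : HasCompactSupport f) :
    limsup (fun k : ℕ ↦ ∫⁻ x, upperSlope (‖f ·‖ₑ) (1 / (k + 1)) x ∂μ) atTop ≤
      ∫⁻ x, ‖fderiv ℝ f x‖ₑ ∂μ := by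
  have hscale : Tendsto (fun k : ℕ ↦ 1 / ((k : ℝ) + 1)) atTop (𝓝[>] 0) :=
    tendsto_nhdsWithin_iff.2 ⟨tendsto_one_div_add_atTop_nhds_zero_nat,
      .of_forall fun _ ↦ mem_Ioi.2 Nat.one_div_pos_of_nat⟩
  have hdominant : ∫⁻ x, (cthickening 1 (tsupport f)).indicator (fun _ ↦ (K : ℝ≥0∞)) x ∂μ ≠ ∞ := by
    rw [lintegral_indicator isClosed_cthickening.measurableSet, setLIntegral_const]
    exact ENNReal.mul_ne_top ENNReal.coe_ne_top hf_supp.cthickening.measure_lt_top.ne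
  calc _ ≤ ∫⁻ x, limsup (fun k : ℕ ↦ upperSlope (‖f ·‖ₑ) (1 / ((k : ℝ) + 1)) x) atTop ∂μ :=
        limsup_lintegral_le _ (fun k ↦ measurable_upperSlope hf.continuous.enorm.measurable _)
          (fun k ↦ ae_of_all _ fun x ↦ upperSlope_enorm_le_indicator hf
            ((div_le_one (by positivity)).2 (by simp)) x) hdominant
    _ ≤ ∫⁻ x, ‖fderiv ℝ f x‖ₑ ∂μ := by
        refine lintegral_mono_ae (hf.ae_differentiableAt.mono fun x hx ↦ ?_)
        exact (limsup_le_limsup_of_le hscale).trans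
          (limsup_upperSlope_enorm_le_of_hasFDerivAt hx.hasFDerivAt)

theorem isoperimetricConst_mul_lintegral_le_lintegral_enorm_fderiv
    (hE : 1 < finrank ℝ E) (hf : LipschitzWith K f) (hf_supp : HasCompactSupport f) :
    isoperimetricConst μ *
        ∫⁻ t in Ioi (0 : ℝ), μ {x | ENNReal.ofReal t < ‖f x‖ₑ} ^ (1 - (finrank ℝ E : ℝ)⁻¹) ≤
      ∫⁻ x, ‖fderiv ℝ f x‖ₑ ∂μ :=
  (le_limsup_of_frequently_le' <| .of_forall fun _ ↦
    isoperimetricConst_mul_lintegral_le_lintegral_upperSlope μ hE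
      hf.continuous.enorm.measurable
      (hf.continuous.integrable_of_hasCompactSupport hf_supp).hasFiniteIntegral.ne
      Nat.one_div_pos_of_nat).trans (limsup_lintegral_upperSlope_enorm_le μ hf hf_supp)

theorem integrable_fderiv_of_lipschitzWith (hf : LipschitzWith K f)
    (hf_supp : HasCompactSupport f) : Integrable (fderiv ℝ f) μ := by
  have := FiniteDimensional.complete ℝ F
  have hsupp : HasCompactSupport (fderiv ℝ f) := hf_supp.fderiv (𝕜 := ℝ)
  have hintegrableOn : IntegrableOn (fderiv ℝ f) (tsupport (fderiv ℝ f)) μ :=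
    Measure.integrableOn_of_bounded (M := K) hsupp.measure_lt_top.ne
      (measurable_fderiv ℝ f).aestronglyMeasurable
      (ae_of_all _ fun _ ↦ norm_fderiv_le_of_lipschitz ℝ hf)
  exact (integrableOn_iff_integrable_of_support_subset (f := fderiv ℝ f)
    (subset_tsupport _)).1 hintegrableOn

end Sobolev

section Rearrangement

variable {α : Type*} [MeasurableSpace α] (μ : Measure α) (f : α → ℝ)

theorem distrib_eq_toReal_measure_superlevel {t : ℝ} (ht : 0 ≤ t) :
    distrib μ f t = (μ {x | ENNReal.ofReal t < ‖f x‖ₑ}).toReal := by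
  simp only [distrib, ← ofReal_norm, ENNReal.ofReal_lt_ofReal_iff_of_nonneg ht, Real.norm_eq_abs]

theorem ofReal_distrib_rpow_le (p : ℝ) {t : ℝ} (ht : 0 ≤ t) :
    ENNReal.ofReal (distrib μ f t ^ p) ≤ μ {x | ENNReal.ofReal t < ‖f x‖ₑ} ^ p := by
  rw [distrib_eq_toReal_measure_superlevel μ f ht, ENNReal.toReal_rpow]
  exact ENNReal.ofReal_toReal_le

theorem measurable_distrib : Measurable (distrib μ f) :=
  (Antitone.measurable fun _ _ hst ↦
    measure_mono fun _ hx ↦ hst.trans_lt hx : Measurable fun t ↦ μ {x | t < |f x|}).ennreal_toReal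

theorem ofReal_rearr_le_volume (t : ℝ) :
    ENNReal.ofReal (rearr μ f t) ≤ volume.restrict (Ioi 0) {s | t < distrib μ f s} := by
  calc ENNReal.ofReal (rearr μ f t) = volume (Ioo 0 (rearr μ f t)) := by simp
    _ ≤ volume ({s | t < distrib μ f s} ∩ Ioi 0) := measure_mono fun s hs ↦
        ⟨not_le.1 fun hle ↦ notMem_of_lt_csInf hs.2 ⟨0, fun _ h ↦ h.1⟩ ⟨hs.1.le, hle⟩, hs.1⟩
    _ ≤ volume.restrict (Ioi 0) {s | t < distrib μ f s} := Measure.le_restrict_apply _ _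

theorem lintegral_rpow_mul_rearr_le {p : ℝ} (hp : 0 < p) :
    ∫⁻ t in Ioi (0 : ℝ), ENNReal.ofReal (t ^ (p - 1) * rearr μ f t) ≤
      ENNReal.ofReal p⁻¹ * ∫⁻ s in Ioi (0 : ℝ), μ {x | ENNReal.ofReal s < ‖f x‖ₑ} ^ p := by
  have hlayer := lintegral_rpow_eq_lintegral_meas_lt_mul (f := distrib μ f)
    (volume.restrict (Ioi 0)) (ae_of_all _ fun _ ↦ ENNReal.toReal_nonneg)
    (measurable_distrib μ f).aemeasurable hp
  calc ∫⁻ t in Ioi (0 : ℝ), ENNReal.ofReal (t ^ (p - 1) * rearr μ f t)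
      ≤ ∫⁻ t in Ioi (0 : ℝ), volume.restrict (Ioi 0) {s | t < distrib μ f s} *
          ENNReal.ofReal (t ^ (p - 1)) := by
        refine setLIntegral_mono' measurableSet_Ioi fun t (ht : 0 < t) ↦ ?_
        rw [ENNReal.ofReal_mul (by positivity), mul_comm]
        gcongr
        exact ofReal_rearr_le_volume μ f t
    _ = ENNReal.ofReal p⁻¹ * ∫⁻ s in Ioi (0 : ℝ), ENNReal.ofReal (distrib μ f s ^ p) := by
        rw [hlayer, ← mul_assoc, ← ENNReal.ofReal_mul (by positivity), inv_mul_cancel₀ hp.ne',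
          ENNReal.ofReal_one, one_mul]
    _ ≤ ENNReal.ofReal p⁻¹ * ∫⁻ s in Ioi (0 : ℝ), μ {x | ENNReal.ofReal s < ‖f x‖ₑ} ^ p := by
        refine mul_le_mul_right (setLIntegral_mono' measurableSet_Ioi fun s (hs : 0 < s) ↦ ?_) _
        exact ofReal_distrib_rpow_le μ f p hs.le

end Rearrangement

theorem sharp_gagliardo_nirenberg_general {E : Type*} [NormedAddCommGroup E] [NormedSpace ℝ E]
    [FiniteDimensional ℝ E] [MeasurableSpace E] [BorelSpace E] (μ : Measure E)
    [μ.IsAddHaarMeasure] (hE : 1 < finrank ℝ E) {K : ℝ≥0} {f : E → ℝ} (hf : LipschitzWith K f)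
    (hf_supp : HasCompactSupport f) :
    ∫⁻ t in Ioi (0 : ℝ), ENNReal.ofReal
        (t ^ ((1 : ℝ) / ((finrank ℝ E : ℝ) / ((finrank ℝ E : ℝ) - 1)) - 1) * rearr μ f t) ≤
      ENNReal.ofReal (((finrank ℝ E : ℝ) / ((finrank ℝ E : ℝ) - 1)) *
        ((finrank ℝ E : ℝ) * (μ (ball 0 1)).toReal ^ ((1 : ℝ) / (finrank ℝ E : ℝ)))⁻¹ *
          ∫ x, ‖fderiv ℝ f x‖ ∂μ) := by
  set d := (finrank ℝ E : ℝ) with hd_def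
  set τ := d * (μ (ball 0 1)).toReal ^ (1 / d) with hτ_def
  have hd : 1 < d := Nat.one_lt_cast.2 hE
  have hp : 0 < 1 - d⁻¹ := sub_pos.2 (inv_lt_one_of_one_lt₀ hd)
  have hexponent : 1 / (d / (d - 1)) = 1 - d⁻¹ := by field_simp
  have hconst : d / (d - 1) = (1 - d⁻¹)⁻¹ := by rw [← hexponent, one_div, inv_inv]
  have hτ : 0 < τ := by
    have := ENNReal.toReal_pos (measure_ball_pos μ (0 : E) one_pos).ne' measure_ball_lt_top.ne
    positivity
  have hsobolev := isoperimetricConst_mul_lintegral_le_lintegral_enorm_fderiv μ hE hf hf_supp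
  rw [isoperimetricConst_eq_ofReal, ← hd_def, ← one_div d, ← hτ_def, one_div d] at hsobolev
  rw [hexponent, hconst, mul_assoc]
  calc _ ≤ ENNReal.ofReal (1 - d⁻¹)⁻¹ *
          ∫⁻ s in Ioi (0 : ℝ), μ {x | ENNReal.ofReal s < ‖f x‖ₑ} ^ (1 - d⁻¹) :=
        lintegral_rpow_mul_rearr_le μ f hp
    _ ≤ ENNReal.ofReal (1 - d⁻¹)⁻¹ * ((ENNReal.ofReal τ)⁻¹ * ∫⁻ x, ‖fderiv ℝ f x‖ₑ ∂μ) := by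
        gcongr
        rwa [← ENNReal.div_eq_inv_mul, ENNReal.le_div_iff_mul_le (by simp [hτ]) (by simp),
          mul_comm]
    _ = ENNReal.ofReal ((1 - d⁻¹)⁻¹ * (τ⁻¹ * ∫ x, ‖fderiv ℝ f x‖ ∂μ)) := by
        rw [ENNReal.ofReal_mul (inv_nonneg.2 hp.le), ENNReal.ofReal_mul (inv_nonneg.2 hτ.le),
          ENNReal.ofReal_inv_of_pos hτ,
          ofReal_integral_norm_eq_lintegral_enorm (integrable_fderiv_of_lipschitzWith μ hf hf_supp)]

/-- The sharp Gagliardo–Nirenberg inequality: for `n > 1`,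
`n' = n/(n-1)`, `τₙ = n βₙ^{1/n}` (`βₙ` the volume of the unit ball),
`∫₀^∞ t^{1/n' - 1} f*(t) dt ≤ n' τₙ⁻¹ ∫ |∇f| dx` for every `f ∈ Lip₀(ℝⁿ)`. -/
theorem sharp_gagliardo_nirenberg
    (n : ℕ) (hn : 1 < n) (f : EuclideanSpace ℝ (Fin n) → ℝ)
    (hfLip : ∃ K, LipschitzWith K f) (hfsupp : HasCompactSupport f) :
    ∫⁻ t in Ioi (0:ℝ),
        ENNReal.ofReal (t ^ ((1:ℝ) / ((n:ℝ) / ((n:ℝ) - 1)) - 1) * rearr volume f t) ≤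
      ENNReal.ofReal (((n:ℝ) / ((n:ℝ) - 1)) *
        ((n:ℝ) * (volume (Metric.ball (0 : EuclideanSpace ℝ (Fin n)) 1)).toReal ^
          ((1:ℝ) / (n:ℝ)))⁻¹ * ∫ x, ‖fderiv ℝ f x‖) := by
  obtain ⟨K, hK⟩ := hfLip
  simpa using sharp_gagliardo_nirenberg_general volume (by simpa using hn) hK hfsupp
end
end

section
/- Let n > 1. There exists a constant C = C(n) such that for every f ∈ Lip₀(ℝⁿ) and every t > 0: f**(t) − f*(t) ≤ C·t^{1/n}·|∇f|**(t), where |∇f|**(t) = (1/t)∫₀ᵗ |∇f|*(s)ds. -/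
/-!
Integrating the layers of `f` above the level `f*(t)` gives
`t (f**(t) - f*(t)) = ∫ (|f| - f*(t))⁺`, and the truncation `(|f| - f*(t))⁺` lives on a set of
measure at most `t`. On such a set the Gagliardo–Nirenberg–Sobolev and Hölder inequalities
bound the integral of a function by `C t^{1/n}` times that of its gradient, while the
integral of `|∇f|` over any set of measure at most `t` is at most `t |∇f|**(t)`.
-/

open MeasureTheory Set Filter Topology
open scoped ENNReal NNReal

noncomputable section

open Function Module

section GagliardoNirenbergSobolev

theorem enorm_sub_le_lintegral_enorm_deriv {φ : ℝ → ℝ} {a b : ℝ}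
    (h : AbsolutelyContinuousOnInterval φ a b) :
    ‖φ b - φ a‖ₑ ≤ ∫⁻ y in uIoc a b, ‖deriv φ y‖ₑ := by
  have hnorm : ‖∫ y in a..b, deriv φ y‖ₑ = ‖∫ y in uIoc a b, deriv φ y‖ₑ := by
    simp_rw [← ofReal_norm, intervalIntegral.norm_intervalIntegral_eq]
  rw [← h.integral_deriv_eq_sub, hnorm]
  exact enorm_integral_le_lintegral_enorm _

theorem enorm_le_lintegral_enorm_deriv {K : ℝ≥0} {φ : ℝ → ℝ} (hφ : LipschitzWith K φ)
    (hc : HasCompactSupport φ) (y : ℝ) : ‖φ y‖ₑ ≤ ∫⁻ z, ‖deriv φ z‖ₑ := by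
  obtain ⟨a, ha⟩ := (ne_univ_iff_exists_notMem _).1 hc.isCompact.ne_univ
  calc ‖φ y‖ₑ = ‖φ y - φ a‖ₑ := by rw [image_eq_zero_of_notMem_tsupport ha, sub_zero]
    _ ≤ ∫⁻ z in uIoc a y, ‖deriv φ z‖ₑ :=
      enorm_sub_le_lintegral_enorm_deriv hφ.lipschitzOnWith.absolutelyContinuousOnInterval
    _ ≤ ∫⁻ z, ‖deriv φ z‖ₑ := setLIntegral_le_lintegral _ _

theorem deriv_comp_update {ι : Type*} [DecidableEq ι] (u : (ι → ℝ) → ℝ) (x : ι → ℝ) (i : ι)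
    (y : ℝ) : deriv (u ∘ update x i) y = lineDeriv ℝ u (update x i y) (Pi.single i 1) := by
  have hline (t : ℝ) : update x i y + t • Pi.single i 1 = update x i (y + t) := by
    ext j
    obtain rfl | hj := eq_or_ne j i <;> simp [*]
  simp only [lineDeriv, hline]
  simpa using (deriv_comp_const_add (u ∘ update x i) y 0).symm

theorem lipschitzWith_update {ι : Type*} [Fintype ι] [DecidableEq ι] {X : ι → Type*}
    [∀ i, PseudoEMetricSpace (X i)] (x : ∀ i, X i) (i : ι) : LipschitzWith 1 (update x i) :=
  .of_edist_le fun y z => edist_pi_le_iff.2 fun j => by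
    obtain rfl | hj := eq_or_ne j i <;> simp [*]

variable {ι : Type*} [Fintype ι] {K : ℝ≥0} {u : (ι → ℝ) → ℝ}

-- The Rademacher theorem says nothing about a fixed line, so `lineDeriv` replaces `fderiv` until
-- the integral is over the whole space.
theorem enorm_le_lintegral_iSup_enorm_lineDeriv [DecidableEq ι] (hu : LipschitzWith K u)
    (hc : HasCompactSupport u) (x : ι → ℝ) (i : ι) :
    ‖u x‖ₑ ≤ ∫⁻ y, ⨆ j, ‖lineDeriv ℝ u (update x i y) (Pi.single j 1)‖ₑ := by
  calc ‖u x‖ₑ = ‖(u ∘ update x i) (x i)‖ₑ := by simp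
    _ ≤ ∫⁻ y, ‖deriv (u ∘ update x i) y‖ₑ :=
      enorm_le_lintegral_enorm_deriv (hu.comp (lipschitzWith_update x i))
        (hc.comp_isClosedEmbedding (isClosedEmbedding_update x i)) (x i)
    _ ≤ ∫⁻ y, ⨆ j, ‖lineDeriv ℝ u (update x i y) (Pi.single j 1)‖ₑ := by
      gcongr with y
      rw [deriv_comp_update]
      exact le_iSup (fun j => ‖lineDeriv ℝ u (update x i y) (Pi.single j 1)‖ₑ) i

theorem lintegral_iSup_enorm_lineDeriv_le [DecidableEq ι] (hu : LipschitzWith K u) :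
    ∫⁻ x, ⨆ i, ‖lineDeriv ℝ u x (Pi.single i 1)‖ₑ ≤ ∫⁻ x, ‖fderiv ℝ u x‖ₑ := by
  refine lintegral_mono_ae (hu.ae_differentiableAt.mono fun x hx => iSup_le fun i => ?_)
  simpa [hx.lineDeriv_eq_fderiv, Pi.enorm_single] using
    (fderiv ℝ u x).le_opENorm (Pi.single i 1)

theorem lintegral_enorm_rpow_le_rpow_lintegral_enorm_fderiv (hu : LipschitzWith K u)
    (hc : HasCompactSupport u) {p : ℝ} (hp : Real.HolderConjugate (Fintype.card ι) p) :
    ∫⁻ x, ‖u x‖ₑ ^ p ≤ (∫⁻ x, ‖fderiv ℝ u x‖ₑ) ^ p := by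
  classical
  have hcard : 0 < (Fintype.card ι : ℝ) - 1 := sub_pos.2 hp.lt
  let g (x : ι → ℝ) : ℝ≥0∞ := ⨆ i, ‖lineDeriv ℝ u x (Pi.single i 1)‖ₑ
  have hg : Measurable g := .iSup fun i => (measurable_lineDeriv hu.continuous).enorm
  calc ∫⁻ x, ‖u x‖ₑ ^ p
      = ∫⁻ x, ∏ _i : ι, ‖u x‖ₑ ^ (1 / ((Fintype.card ι : ℝ) - 1)) := by
        simp_rw [Finset.prod_const, Finset.card_univ, ← ENNReal.rpow_mul_natCast,
          hp.conjugate_eq, one_div_mul_eq_div]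
    _ ≤ ∫⁻ x, ∏ i : ι, (∫⁻ y, g (update x i y)) ^ (1 / ((Fintype.card ι : ℝ) - 1)) := by
        gcongr with x i
        exact enorm_le_lintegral_iSup_enorm_lineDeriv hu hc x i
    _ ≤ (∫⁻ x, g x) ^ p := lintegral_prod_lintegral_pow_le _ hp hg
    _ ≤ (∫⁻ x, ‖fderiv ℝ u x‖ₑ) ^ p :=
        ENNReal.rpow_le_rpow (lintegral_iSup_enorm_lineDeriv_le hu) hp.symm.nonneg

theorem enorm_le_lintegral_enorm_fderiv [Unique ι] (hu : LipschitzWith K u)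
    (hc : HasCompactSupport u) (x : ι → ℝ) : ‖u x‖ₑ ≤ ∫⁻ x, ‖fderiv ℝ u x‖ₑ := by
  let g (x : ι → ℝ) : ℝ≥0∞ := ⨆ i, ‖lineDeriv ℝ u x (Pi.single i 1)‖ₑ
  calc ‖u x‖ₑ ≤ ∫⁻ y, g (update x default y) :=
        enorm_le_lintegral_iSup_enorm_lineDeriv hu hc x default
    _ = ∫⁻ x, g x := by
        have := congrFun (lmarginal_univ (μ := fun _ : ι => (volume : Measure ℝ)) (f := g)) x
        rwa [Finset.univ_unique, lmarginal_singleton] at this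
    _ ≤ ∫⁻ x, ‖fderiv ℝ u x‖ₑ := lintegral_iSup_enorm_lineDeriv_le hu

theorem eLpNorm_le_eLpNorm_fderiv_one_of_lipschitzWith (hu : LipschitzWith K u)
    (hc : HasCompactSupport u) {p : ℝ≥0∞} [ENNReal.HolderConjugate (Fintype.card ι) p] :
    eLpNorm u p volume ≤ eLpNorm (fderiv ℝ u) 1 volume := by
  have hp : p ≠ 0 := ENNReal.HolderConjugate.ne_zero p (Fintype.card ι)
  rw [eLpNorm_one_eq_lintegral_enorm]
  obtain rfl | hp_top := eq_or_ne p ∞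
  · have hcard : Fintype.card ι = 1 := by
      simpa using ENNReal.HolderConjugate.inv_add_inv_eq_one (Fintype.card ι : ℝ≥0∞) ∞
    obtain ⟨_⟩ := Fintype.card_eq_one_iff_nonempty_unique.1 hcard
    exact eLpNormEssSup_le_of_ae_enorm_bound
      (.of_forall (enorm_le_lintegral_enorm_fderiv hu hc))
  · have hp_real : Real.HolderConjugate (Fintype.card ι) p.toReal := by
      simpa using ENNReal.HolderConjugate.toReal_of_ne_top (ENNReal.natCast_ne_top _) hp_top
    rw [eLpNorm_eq_lintegral_rpow_enorm_toReal hp hp_top, one_div,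
      ENNReal.rpow_inv_le_iff hp_real.symm.pos]
    exact lintegral_enorm_rpow_le_rpow_lintegral_enorm_fderiv hu hc hp_real

end GagliardoNirenbergSobolev

section FaberKrahn

variable {E F : Type*} [NormedAddCommGroup E] [NormedSpace ℝ E] [MeasurableSpace E]
  [NormedAddCommGroup F] [NormedSpace ℝ F] [MeasurableSpace F]
  {μ : Measure E} {C C' : ℝ≥0} {θ : ℝ}

/-- The `L¹` Faber–Krahn inequality `∫ |u| ≤ C μ(supp u)^θ ∫ |∇u|` for Lipschitz functions of
compact support. On `ℝⁿ` it holds with `θ = 1/n`. It is stated with lower integrals, so that both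
sides make sense for every measure `μ`; `supp u` is the set `{u ≠ 0}`, not its closure. -/
def FaberKrahnInequality (μ : Measure E) (C : ℝ≥0) (θ : ℝ) : Prop :=
  ∀ (K : ℝ≥0) (u : E → ℝ), LipschitzWith K u → HasCompactSupport u →
    ∫⁻ x, ‖u x‖ₑ ∂μ ≤ C * μ (support u) ^ θ * ∫⁻ x, ‖fderiv ℝ u x‖ₑ ∂μ

namespace FaberKrahnInequality

theorem mono (h : FaberKrahnInequality μ C θ) (hC : C ≤ C') : FaberKrahnInequality μ C' θ :=
  fun K u hu hc => (h K u hu hc).trans (by gcongr)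

theorem smul_measure (h : FaberKrahnInequality μ C θ) (hθ : 0 ≤ θ) {c : ℝ≥0}
    (hc : c ≠ 0) : FaberKrahnInequality (c • μ) (C * (c ^ θ)⁻¹) θ := by
  intro K u hu hsupp
  have hcancel : (c ^ θ)⁻¹ * c ^ θ = 1 :=
    inv_mul_cancel₀ (NNReal.rpow_pos (pos_iff_ne_zero.2 hc)).ne'
  simp only [Measure.smul_apply, lintegral_smul_measure, ENNReal.smul_def, smul_eq_mul]
  rw [ENNReal.mul_rpow_of_nonneg _ _ hθ, ← ENNReal.coe_rpow_of_nonneg _ hθ]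
  calc (c : ℝ≥0∞) * ∫⁻ x, ‖u x‖ₑ ∂μ
      ≤ c * (C * μ (support u) ^ θ * ∫⁻ x, ‖fderiv ℝ u x‖ₑ ∂μ) := by
        gcongr
        exact h K u hu hsupp
    _ = ((c ^ θ)⁻¹ * c ^ θ : ℝ≥0) * (c * (C * μ (support u) ^ θ * ∫⁻ x, ‖fderiv ℝ u x‖ₑ ∂μ)) := by
        rw [hcancel, ENNReal.coe_one, one_mul]
    _ = _ := by
        push_cast
        ring

theorem map_measure [BorelSpace E] [BorelSpace F] (h : FaberKrahnInequality μ C θ) (e : E ≃L[ℝ] F) :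
    FaberKrahnInequality (μ.map e) (C * ‖(e : E →L[ℝ] F)‖₊) θ := by
  intro K u hu hc
  have hmap (g : F → ℝ≥0∞) : ∫⁻ y, g y ∂μ.map e = ∫⁻ x, g (e x) ∂μ :=
    lintegral_map_equiv g e.toHomeomorph.toMeasurableEquiv
  have hsupp : μ.map e (support u) = μ (support (u ∘ e)) := by
    rw [support_comp_eq_preimage]
    exact e.toHomeomorph.toMeasurableEquiv.map_apply _
  have hderiv (x : E) :
      ‖fderiv ℝ (u ∘ e) x‖ₑ ≤ ‖(e : E →L[ℝ] F)‖₊ * ‖fderiv ℝ u (e x)‖ₑ := by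
    rw [e.comp_right_fderiv, mul_comm]
    exact ContinuousLinearMap.opENorm_comp_le _ _
  rw [hmap, hmap, hsupp]
  calc ∫⁻ x, ‖u (e x)‖ₑ ∂μ
      ≤ C * μ (support (u ∘ e)) ^ θ * ∫⁻ x, ‖fderiv ℝ (u ∘ e) x‖ₑ ∂μ :=
        h _ (u ∘ e) (hu.comp (e : E →L[ℝ] F).lipschitz) (hc.comp_homeomorph e.toHomeomorph)
    _ ≤ C * μ (support (u ∘ e)) ^ θ *
          (‖(e : E →L[ℝ] F)‖₊ * ∫⁻ x, ‖fderiv ℝ u (e x)‖ₑ ∂μ) := by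
        rw [← lintegral_const_mul' _ _ ENNReal.coe_ne_top]
        gcongr with x
        exact hderiv x
    _ = _ := by
        push_cast
        ring

end FaberKrahnInequality

theorem faberKrahnInequality_pi (ι : Type*) [Fintype ι] [Nonempty ι] :
    FaberKrahnInequality (volume : Measure (ι → ℝ)) 1 (Fintype.card ι : ℝ)⁻¹ := by
  intro K u hu hc
  have hcard : 1 ≤ (Fintype.card ι : ℝ≥0∞) := by exact_mod_cast Fintype.card_pos
  let p := ENNReal.conjExponent (Fintype.card ι)
  have : ENNReal.HolderConjugate (Fintype.card ι) p := .conjExponent hcard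
  have hp : 1 ≤ p := ENNReal.HolderConjugate.one_le p (Fintype.card ι)
  have hexp : 1 / (1 : ℝ≥0∞).toReal - 1 / p.toReal = (Fintype.card ι : ℝ)⁻¹ := by
    have hconj := congrArg ENNReal.toReal <|
      ENNReal.HolderConjugate.inv_add_inv_eq_one (Fintype.card ι : ℝ≥0∞) p
    rw [ENNReal.toReal_add (by simp) (by simpa using (one_pos.trans_le hp).ne')] at hconj
    simp only [ENNReal.toReal_inv, ENNReal.toReal_natCast, ENNReal.toReal_one] at hconj
    simp only [ENNReal.toReal_one, one_div]
    linarith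
  simp only [← eLpNorm_one_eq_lintegral_enorm, ENNReal.coe_one, one_mul]
  calc eLpNorm u 1 volume = eLpNorm u 1 (volume.restrict (support u)) :=
        (eLpNorm_restrict_eq_of_support_subset subset_rfl).symm
    _ ≤ eLpNorm u p (volume.restrict (support u)) *
          volume (support u) ^ (Fintype.card ι : ℝ)⁻¹ := by
        simpa only [hexp, Measure.restrict_apply_univ] using
          eLpNorm_le_eLpNorm_mul_rpow_measure_univ (μ := volume.restrict (support u)) hp
            hu.continuous.aestronglyMeasurable
    _ ≤ eLpNorm (fderiv ℝ u) 1 volume * volume (support u) ^ (Fintype.card ι : ℝ)⁻¹ := by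
        rw [eLpNorm_restrict_eq_of_support_subset subset_rfl]
        gcongr
        exact eLpNorm_le_eLpNorm_fderiv_one_of_lipschitzWith hu hc
    _ = _ := mul_comm _ _

theorem exists_faberKrahnInequality_of_isAddHaarMeasure [BorelSpace E] [FiniteDimensional ℝ E]
    [Nontrivial E] (μ : Measure E) [μ.IsAddHaarMeasure] :
    ∃ C : ℝ≥0, 0 < C ∧ FaberKrahnInequality μ C (finrank ℝ E : ℝ)⁻¹ := by
  let ι := Fin (finrank ℝ E)
  have : Nonempty ι := Fin.pos_iff_nonempty.1 finrank_pos
  let e : (ι → ℝ) ≃L[ℝ] E := ContinuousLinearEquiv.ofFinrankEq (by simp [ι])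
  let ν : Measure E := volume.map e
  have : ν.IsAddHaarMeasure := e.isAddHaarMeasure_map volume
  have hμ : μ = Measure.addHaarScalarFactor μ ν • ν := Measure.isAddLeftInvariant_eq_smul μ ν
  have hν : FaberKrahnInequality ν (1 * ‖(e : (ι → ℝ) →L[ℝ] E)‖₊) (finrank ℝ E : ℝ)⁻¹ := by
    simpa [ι] using (faberKrahnInequality_pi ι).map_measure e
  have hFK := hν.smul_measure (by positivity)
    (Measure.addHaarScalarFactor_pos_of_isAddHaarMeasure μ ν).ne'
  rw [← hμ] at hFK
  exact ⟨_, lt_max_of_lt_right one_pos, hFK.mono (le_max_left _ 1)⟩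

end FaberKrahn

section Truncation

variable {E : Type*} [NormedAddCommGroup E] [NormedSpace ℝ E] {f : E → ℝ} {x : E} {a : ℝ}

theorem enorm_fderiv_abs (hf : ContinuousAt f x) (hx : f x ≠ 0) :
    ‖fderiv ℝ (fun y => |f y|) x‖ₑ = ‖fderiv ℝ f x‖ₑ := by
  obtain hneg | hpos := hx.lt_or_gt
  · have habs : (fun y => |f y|) =ᶠ[𝓝 x] fun y => -f y :=
      (hf.eventually_lt continuousAt_const hneg).mono fun y hy => abs_of_neg hy
    rw [habs.fderiv_eq, fderiv_fun_neg, enorm_neg]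
  · have habs : (fun y => |f y|) =ᶠ[𝓝 x] f :=
      (continuousAt_const.eventually_lt hf hpos).mono fun y hy => abs_of_pos hy
    rw [habs.fderiv_eq]

theorem enorm_fderiv_max_zero_le (hf : ContinuousAt f x) :
    ‖fderiv ℝ (fun y => max (f y) 0) x‖ₑ ≤
      {y | 0 < f y}.indicator (fun y => ‖fderiv ℝ f y‖ₑ) x := by
  obtain hx | hx := lt_or_ge 0 (f x)
  · have hmax : (fun y => max (f y) 0) =ᶠ[𝓝 x] f :=
      (continuousAt_const.eventually_lt hf hx).mono fun y hy => max_eq_left hy.le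
    rw [indicator_of_mem (mem_ofPred_eq ▸ hx), hmax.fderiv_eq]
  · have hmin : IsLocalMin (fun y => max (f y) 0) x :=
      .of_forall fun y => by simp [hx]
    simp [hmin.fderiv_eq_zero, enorm_eq_nnnorm]

theorem enorm_fderiv_max_abs_sub_zero_le (hf : ContinuousAt f x) (ha : 0 ≤ a) :
    ‖fderiv ℝ (fun y => max (|f y| - a) 0) x‖ₑ ≤
      {y | a < |f y|}.indicator (fun y => ‖fderiv ℝ f y‖ₑ) x := by
  refine (enorm_fderiv_max_zero_le (f := fun y => |f y| - a) (by fun_prop)).trans_eq ?_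
  by_cases hx : a < |f x|
  · simp [hx, fderiv_sub_const, enorm_fderiv_abs hf (abs_pos.1 (ha.trans_lt hx))]
  · simp [hx]

end Truncation

section Rearrangement

variable {α : Type*} [MeasurableSpace α] {μ : Measure α} {f : α → ℝ} {M a r s t : ℝ}

theorem rearr_nonneg (s : ℝ) : 0 ≤ rearr μ f s :=
  Real.sInf_nonneg fun _ hr => hr.1

theorem rearr2_nonneg (ht : 0 ≤ t) : 0 ≤ rearr2 μ f t :=
  mul_nonneg (one_div_nonneg.2 ht)
    (intervalIntegral.integral_nonneg ht fun s _ => rearr_nonneg s)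

theorem rearr_le_of_distrib_le (hr : 0 ≤ r) (h : distrib μ f r ≤ s) : rearr μ f s ≤ r :=
  csInf_le ⟨0, fun _ hr => hr.1⟩ ⟨hr, h⟩

theorem ofReal_distrib (hfin : μ (support f) ≠ ∞) (hr : 0 ≤ r) :
    ENNReal.ofReal (distrib μ f r) = μ {x | r < |f x|} :=
  ENNReal.ofReal_toReal <| ne_top_of_le_ne_top hfin <|
    measure_mono fun _ hx => abs_pos.1 (hr.trans_lt hx)

theorem antitoneOn_distrib (hfin : μ (support f) ≠ ∞) : AntitoneOn (distrib μ f) (Ici 0) := by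
  intro r hr s _ hrs
  have hfin_r : μ {x | r < |f x|} ≠ ∞ := ofReal_distrib hfin hr ▸ ENNReal.ofReal_ne_top
  exact ENNReal.toReal_mono hfin_r (measure_mono fun x hx => hrs.trans_lt hx)

theorem nonempty_setOf_distrib_le (hM : ∀ᵐ x ∂μ, |f x| ≤ M) (hs : 0 ≤ s) :
    {r | 0 ≤ r ∧ distrib μ f r ≤ s}.Nonempty := by
  have hnull : μ {x | |M| < |f x|} = 0 := by
    simpa only [not_le] using ae_iff.1 (hM.mono fun x hx => hx.trans (le_abs_self M))
  exact ⟨|M|, abs_nonneg M, by simpa [distrib, hnull] using hs⟩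

theorem antitoneOn_rearr (hM : ∀ᵐ x ∂μ, |f x| ≤ M) : AntitoneOn (rearr μ f) (Ici 0) :=
  fun _ hs _ _ hst => csInf_le_csInf ⟨0, fun _ hr => hr.1⟩ (nonempty_setOf_distrib_le hM hs)
    fun _ hr => ⟨hr.1, hr.2.trans hst⟩

theorem intervalIntegrable_rearr (hM : ∀ᵐ x ∂μ, |f x| ≤ M) (ht : 0 ≤ t) :
    IntervalIntegrable (rearr μ f) volume 0 t :=
  ((antitoneOn_rearr hM).mono fun _ hs => (le_inf le_rfl ht).trans hs.1).intervalIntegrable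

theorem distrib_le_of_rearr_lt (hfin : μ (support f) ≠ ∞) (hM : ∀ᵐ x ∂μ, |f x| ≤ M) (hs : 0 ≤ s)
    (h : rearr μ f s < r) : distrib μ f r ≤ s := by
  obtain ⟨q, ⟨hq, hqs⟩, hqr⟩ := exists_lt_of_csInf_lt (nonempty_setOf_distrib_le hM hs) h
  exact (antitoneOn_distrib hfin hq (hq.trans hqr.le) hqr.le).trans hqs

theorem measure_rearr_lt_abs_le (hfin : μ (support f) ≠ ∞) (hM : ∀ᵐ x ∂μ, |f x| ≤ M)
    (hs : 0 ≤ s) : μ {x | rearr μ f s < |f x|} ≤ ENNReal.ofReal s := by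
  obtain ⟨u, hu_anti, hu_gt, hu_lim⟩ := exists_seq_strictAnti_tendsto (rearr μ f s)
  have hunion : {x | rearr μ f s < |f x|} = ⋃ n, {x | u n < |f x|} := by
    ext x
    simp only [mem_ofPred_eq, mem_iUnion]
    exact ⟨fun hx => (hu_lim.eventually_lt_const hx).exists, fun ⟨n, hn⟩ => (hu_gt n).trans hn⟩
  have hmono : Monotone fun n => {x | u n < |f x|} :=
    fun m n hmn x hx => (hu_anti.antitone hmn).trans_lt hx
  rw [hunion, hmono.measure_iUnion]
  refine iSup_le fun n => ?_
  rw [← ofReal_distrib hfin ((rearr_nonneg s).trans (hu_gt n).le)]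
  exact ENNReal.ofReal_le_ofReal (distrib_le_of_rearr_lt hfin hM hs (hu_gt n))

theorem lt_rearr_iff (hfin : μ (support f) ≠ ∞) (hM : ∀ᵐ x ∂μ, |f x| ≤ M) (hr : 0 ≤ r)
    (hs : 0 ≤ s) : r < rearr μ f s ↔ s < distrib μ f r := by
  rw [← not_le, ← not_le, not_iff_not]
  refine ⟨fun h => ?_, rearr_le_of_distrib_le hr⟩
  refine (antitoneOn_distrib hfin (rearr_nonneg s) hr h).trans ?_
  rw [← ENNReal.ofReal_le_ofReal_iff hs, ofReal_distrib hfin (rearr_nonneg s)]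
  exact measure_rearr_lt_abs_le hfin hM hs

theorem volume_restrict_setOf_lt_rearr (hfin : μ (support f) ≠ ∞) (hM : ∀ᵐ x ∂μ, |f x| ≤ M)
    (hr : 0 ≤ r) (t : ℝ) :
    volume.restrict (Ioc 0 t) {s | r < rearr μ f s} =
      min (ENNReal.ofReal t) (μ {x | r < |f x|}) := by
  have hset : {s | r < rearr μ f s} ∩ Ioo 0 t = Ioo 0 (min t (distrib μ f r)) := by
    ext s
    have hiff : 0 < s → (r < rearr μ f s ↔ s < distrib μ f r) :=
      fun hs => lt_rearr_iff hfin hM hr hs.le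
    simp only [mem_inter_iff, mem_ofPred_eq, mem_Ioo, lt_inf_iff]
    tauto
  rw [Measure.restrict_congr_set Ioo_ae_eq_Ioc.symm, Measure.restrict_apply' measurableSet_Ioo,
    hset, Real.volume_Ioo, sub_zero, ENNReal.ofReal_min, ofReal_distrib hfin hr]

theorem lintegral_ofReal_sub {β : Type*} [MeasurableSpace β] {ν : Measure β} {g : β → ℝ}
    (hg : AEMeasurable g ν) (a : ℝ) :
    ∫⁻ x, ENNReal.ofReal (g x - a) ∂ν = ∫⁻ r in Ioi 0, ν {x | a + r < g x} := by
  have hpos : ∀ᵐ x ∂ν, 0 ≤ max (g x - a) 0 := .of_forall fun x => le_max_right _ _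
  have hlayer := lintegral_eq_lintegral_meas_lt ν hpos (by fun_prop)
  simp only [ENNReal.ofReal_max, ENNReal.ofReal_zero, zero_le, sup_of_le_left] at hlayer
  rw [hlayer]
  refine setLIntegral_congr_fun measurableSet_Ioi fun r hr => ?_
  have : 0 < r := hr
  simp [lt_sub_iff_add_lt', this.not_gt]

theorem setLIntegral_ofReal_rearr_sub (hfin : μ (support f) ≠ ∞) (hM : ∀ᵐ x ∂μ, |f x| ≤ M)
    (ha : 0 ≤ a) (ht : 0 ≤ t) :
    ∫⁻ s in Ioc 0 t, ENNReal.ofReal (rearr μ f s - a) =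
      ∫⁻ r in Ioi 0, min (ENNReal.ofReal t) (μ {x | a + r < |f x|}) := by
  rw [lintegral_ofReal_sub (intervalIntegrable_rearr hM ht).1.aemeasurable]
  exact setLIntegral_congr_fun measurableSet_Ioi fun r hr =>
    volume_restrict_setOf_lt_rearr hfin hM (add_nonneg ha (mem_Ioi.1 hr).le) t

theorem ofReal_mul_rearr2_sub (hM : ∀ᵐ x ∂μ, |f x| ≤ M) (ht : 0 < t) (ha : a ≤ rearr μ f t) :
    ENNReal.ofReal (t * (rearr2 μ f t - a)) =
      ∫⁻ s in Ioc 0 t, ENNReal.ofReal (rearr μ f s - a) := by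
  have hint := intervalIntegrable_rearr hM ht.le
  have hmean : t * (rearr2 μ f t - a) = ∫ s in (0)..t, (rearr μ f s - a) := by
    rw [intervalIntegral.integral_sub hint intervalIntegrable_const,
      intervalIntegral.integral_const, rearr2]
    field_simp
    simp
  have hpos : ∀ᵐ s ∂volume.restrict (Ioc 0 t), 0 ≤ rearr μ f s - a := by
    filter_upwards [ae_restrict_mem measurableSet_Ioc] with s hs
    exact sub_nonneg.2 (ha.trans (antitoneOn_rearr hM hs.1.le ht.le hs.2))
  rw [hmean, intervalIntegral.integral_of_le ht.le]
  exact ofReal_integral_eq_lintegral_ofReal (hint.sub intervalIntegrable_const).1 hpos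

theorem ofReal_mul_rearr2_sub_rearr (hfin : μ (support f) ≠ ∞) (hM : ∀ᵐ x ∂μ, |f x| ≤ M)
    (hf : AEMeasurable f μ) (ht : 0 < t) :
    ENNReal.ofReal (t * (rearr2 μ f t - rearr μ f t)) =
      ∫⁻ x, ENNReal.ofReal (|f x| - rearr μ f t) ∂μ := by
  rw [ofReal_mul_rearr2_sub hM ht le_rfl,
    setLIntegral_ofReal_rearr_sub hfin hM (rearr_nonneg t) ht.le, lintegral_ofReal_sub hf.abs]
  refine setLIntegral_congr_fun measurableSet_Ioi fun r hr => min_eq_right ?_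
  refine (measure_mono fun x (hx : rearr μ f t + r < |f x|) => ?_).trans
    (measure_rearr_lt_abs_le hfin hM ht.le)
  exact (lt_add_of_pos_right _ hr).trans hx

theorem setLIntegral_enorm_le_ofReal_mul_rearr2 (hfin : μ (support f) ≠ ∞)
    (hM : ∀ᵐ x ∂μ, |f x| ≤ M) (hf : AEMeasurable f μ) (ht : 0 < t) {A : Set α}
    (hA : μ A ≤ ENNReal.ofReal t) :
    ∫⁻ x in A, ‖f x‖ₑ ∂μ ≤ ENNReal.ofReal (t * rearr2 μ f t) := by
  calc ∫⁻ x in A, ‖f x‖ₑ ∂μ = ∫⁻ x in A, ENNReal.ofReal (|f x| - 0) ∂μ := by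
        simp only [Real.enorm_eq_ofReal_abs, sub_zero]
    _ = ∫⁻ r in Ioi 0, μ.restrict A {x | 0 + r < |f x|} := lintegral_ofReal_sub hf.abs.restrict 0
    _ ≤ ∫⁻ r in Ioi 0, min (ENNReal.ofReal t) (μ {x | 0 + r < |f x|}) := by
        gcongr with r
        refine le_min ((measure_mono (subset_univ _)).trans ?_) (Measure.restrict_apply_le _ _)
        rwa [Measure.restrict_apply_univ]
    _ = ENNReal.ofReal (t * rearr2 μ f t) := by
        rw [← setLIntegral_ofReal_rearr_sub hfin hM le_rfl ht.le,
          ← ofReal_mul_rearr2_sub hM ht (rearr_nonneg t), sub_zero]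

end Rearrangement

section Oscillation

theorem measure_support_ne_top {X β : Type*} [TopologicalSpace X] [MeasurableSpace X] [Zero β]
    {μ : Measure X} [IsFiniteMeasureOnCompacts μ] {f : X → β} (hc : HasCompactSupport f) :
    μ (support f) ≠ ∞ :=
  measure_ne_top_of_subset (subset_tsupport f) hc.isCompact.measure_ne_top

variable {E : Type*} [NormedAddCommGroup E] [NormedSpace ℝ E] [MeasurableSpace E] [BorelSpace E]
  {μ : Measure E} {K C : ℝ≥0} {θ t : ℝ} {f : E → ℝ}

theorem FaberKrahnInequality.lintegral_ofReal_abs_sub_le (h : FaberKrahnInequality μ C θ)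
    (hf : LipschitzWith K f) (hc : HasCompactSupport f) {a : ℝ} (ha : 0 ≤ a) :
    ∫⁻ x, ENNReal.ofReal (|f x| - a) ∂μ ≤
      C * μ {x | a < |f x|} ^ θ * ∫⁻ x in {x | a < |f x|}, ‖fderiv ℝ f x‖ₑ ∂μ := by
  let g (x : E) : ℝ := max (|f x| - a) 0
  have hg : LipschitzWith K g := by
    simpa using! ((lipschitzWith_one_norm.comp hf).sub (.const a)).max_const 0
  have hg_supp : support g = {x | a < |f x|} := by
    ext x
    simp [g]
  have hg_compact : HasCompactSupport g :=
    hc.mono fun x hx => abs_pos.1 (ha.trans_lt (by simpa [hg_supp] using hx))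
  have hmeas : MeasurableSet {x | a < |f x|} :=
    measurableSet_lt measurable_const hf.continuous.abs.measurable
  calc ∫⁻ x, ENNReal.ofReal (|f x| - a) ∂μ = ∫⁻ x, ‖g x‖ₑ ∂μ := by
        simp [g, Real.enorm_eq_ofReal]
    _ ≤ C * μ (support g) ^ θ * ∫⁻ x, ‖fderiv ℝ g x‖ₑ ∂μ := h K g hg hg_compact
    _ ≤ C * μ {x | a < |f x|} ^ θ * ∫⁻ x in {x | a < |f x|}, ‖fderiv ℝ f x‖ₑ ∂μ := by
        rw [hg_supp, ← lintegral_indicator hmeas]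
        gcongr with x
        exact enorm_fderiv_max_abs_sub_zero_le hf.continuous.continuousAt ha

variable [IsFiniteMeasureOnCompacts μ]

theorem setLIntegral_enorm_fderiv_le (hf : LipschitzWith K f) (hc : HasCompactSupport f)
    (ht : 0 < t) {A : Set E} (hA : μ A ≤ ENNReal.ofReal t) :
    ∫⁻ x in A, ‖fderiv ℝ f x‖ₑ ∂μ ≤
      ENNReal.ofReal (t * rearr2 μ (fun x => ‖fderiv ℝ f x‖) t) := by
  have hfin : μ (support fun x => ‖fderiv ℝ f x‖) ≠ ∞ :=
    measure_support_ne_top (hc.fderiv ℝ).norm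
  have hbound (x : E) : |‖fderiv ℝ f x‖| ≤ K := by
    simpa using norm_fderiv_le_of_lipschitz ℝ hf
  simpa using setLIntegral_enorm_le_ofReal_mul_rearr2 hfin (.of_forall hbound)
    (measurable_fderiv ℝ f).norm.aemeasurable ht hA

theorem FaberKrahnInequality.rearr2_sub_rearr_le (h : FaberKrahnInequality μ C θ) (hθ : 0 ≤ θ)
    (hf : LipschitzWith K f) (hc : HasCompactSupport f) (ht : 0 < t) :
    rearr2 μ f t - rearr μ f t ≤ C * t ^ θ * rearr2 μ (fun x => ‖fderiv ℝ f x‖) t := by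
  obtain ⟨M, hbound⟩ := hc.exists_bound_of_continuous hf.continuous
  have hM : ∀ᵐ x ∂μ, |f x| ≤ M := .of_forall hbound
  have hfin := measure_support_ne_top (μ := μ) hc
  have hlevel := measure_rearr_lt_abs_le hfin hM ht.le
  have hgrad : 0 ≤ rearr2 μ (fun x => ‖fderiv ℝ f x‖) t := rearr2_nonneg ht.le
  have hscaled : ENNReal.ofReal (t * (rearr2 μ f t - rearr μ f t)) ≤
      ENNReal.ofReal (C * t ^ θ * (t * rearr2 μ (fun x => ‖fderiv ℝ f x‖) t)) := by
    rw [ofReal_mul_rearr2_sub_rearr hfin hM hf.continuous.aemeasurable ht,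
      ENNReal.ofReal_mul (by positivity), ENNReal.ofReal_mul (by positivity),
      ENNReal.ofReal_coe_nnreal, ← ENNReal.ofReal_rpow_of_nonneg ht.le hθ]
    refine (h.lintegral_ofReal_abs_sub_le hf hc (rearr_nonneg t)).trans ?_
    gcongr
    exact setLIntegral_enorm_fderiv_le hf hc ht hlevel
  rw [ENNReal.ofReal_le_ofReal_iff (by positivity)] at hscaled
  refine le_of_mul_le_mul_left (hscaled.trans_eq ?_) ht
  ring

theorem euclidean_oscillation_inequality_general [FiniteDimensional ℝ E] [Nontrivial E]
    (μ : Measure E) [μ.IsAddHaarMeasure] :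
    ∃ C : ℝ, 0 < C ∧ ∀ f : E → ℝ, (∃ K, LipschitzWith K f) → HasCompactSupport f →
      ∀ t : ℝ, 0 < t → rearr2 μ f t - rearr μ f t ≤
        C * t ^ ((1 : ℝ) / finrank ℝ E) * rearr2 μ (fun x => ‖fderiv ℝ f x‖) t := by
  obtain ⟨C, hC, hFK⟩ := exists_faberKrahnInequality_of_isAddHaarMeasure μ
  rw [one_div]
  exact ⟨C, hC, fun f ⟨K, hK⟩ hc t ht => hFK.rearr2_sub_rearr_le (by positivity) hK hc ht⟩

end Oscillation

/-- For `n > 1` there is `C = C(n)` such that for every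
`f ∈ Lip₀(ℝⁿ)` and `t > 0`, `f**(t) - f*(t) ≤ C t^{1/n} |∇f|**(t)`. -/
theorem euclidean_oscillation_inequality (n : ℕ) (hn : 1 < n) :
    ∃ C : ℝ, 0 < C ∧ ∀ f : EuclideanSpace ℝ (Fin n) → ℝ,
      (∃ K, LipschitzWith K f) → HasCompactSupport f → ∀ t : ℝ, 0 < t →
        rearr2 volume f t - rearr volume f t ≤
          C * t ^ ((1:ℝ) / (n:ℝ)) * rearr2 volume (fun x => ‖fderiv ℝ f x‖) t := by
  have : Nontrivial (EuclideanSpace ℝ (Fin n)) :=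
    Module.nontrivial_of_finrank_pos (R := ℝ) (by simpa using hn.pos)
  simpa using euclidean_oscillation_inequality_general
    (volume : Measure (EuclideanSpace ℝ (Fin n)))
end
end
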